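/- For every rational α ∈ (0,1/2) there exists a constant C_0(α) > 0 such that liminf_{N→∞} (1/N) ( E[ max_{σ ∈ S_N(α)} H_0(σ) ] − E[ max_{σ ∈ S_N(α)} H_1(σ) ] ) > C_0(α), where the liminf is over integers N with αN an integer. -/

import Mathlib

open Finset MeasureTheory ProbabilityTheory

noncomputable section

/-- The law of the independent Gaussian entries used to build a GOE matrix: a product of
centered real Gaussians indexed by pairs `(i,j)`, with variance `2` on the diagonal and `1`
off the diagonal.  (Only the coordinates with `i ≤ j` are ever read off, so this realizes a
GOE matrix: the entries `(J_{ij})_{i≤j}` are independent centered Gaussians with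
`Var(J_{ij}) = 1` for `i < j` and `Var(J_{ii}) = 2`.) -/
def goeMeasure (N : ℕ) : Measure ((Fin N × Fin N) → ℝ) :=
  Measure.pi fun p => gaussianReal 0 (if p.1 = p.2 then 2 else 1)

/-- The symmetric (GOE) matrix built from the sample `ω`. -/
def Jmat {N : ℕ} (ω : (Fin N × Fin N) → ℝ) (i j : Fin N) : ℝ :=
  if i ≤ j then ω (i, j) else ω (j, i)

/-- The value `±1` of a Boolean spin. -/
def spin (b : Bool) : ℝ := if b then 1 else -1

/-- The configuration space `S_N(α) = {σ ∈ {−1,1}^N : ∑ᵢ σᵢ = N(2α−1)}`. -/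
def SNset (N : ℕ) (α : ℚ) : Set (Fin N → Bool) :=
  {σ | ∑ i, spin (σ i) = (N : ℝ) * (2 * (α : ℝ) - 1)}

open Classical in
/-- `S_N(α)` as a finite set. -/
def SNfinset (N : ℕ) (α : ℚ) : Finset (Fin N → Bool) :=
  Finset.univ.filter fun σ => ∑ i, spin (σ i) = (N : ℝ) * (2 * (α : ℝ) - 1)

/-- `H_0(σ) = N^{-1/2} ∑_{i,j} J_{ij} σ_i σ_j`. -/
def H0 {N : ℕ} (ω : (Fin N × Fin N) → ℝ) (σ : Fin N → Bool) : ℝ :=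
  (Real.sqrt N)⁻¹ * ∑ i, ∑ j, Jmat ω i j * spin (σ i) * spin (σ j)

/-- `g_i = N^{-1/2} ∑_j J_{ij}`. -/
def gvec {N : ℕ} (ω : (Fin N × Fin N) → ℝ) (i : Fin N) : ℝ :=
  (Real.sqrt N)⁻¹ * ∑ j, Jmat ω i j

/-- `H_1(σ) = H_0(σ) − 2(2α−1) ∑ᵢ gᵢ σᵢ + (2α−1)² N^{-1/2} ∑_{i,j} J_{ij}`. -/
def H1 {N : ℕ} (α : ℚ) (ω : (Fin N × Fin N) → ℝ) (σ : Fin N → Bool) : ℝ :=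
  H0 ω σ - 2 * (2 * (α : ℝ) - 1) * ∑ i, gvec ω i * spin (σ i)
    + (2 * (α : ℝ) - 1) ^ 2 * ((Real.sqrt N)⁻¹ * ∑ i, ∑ j, Jmat ω i j)

/-- `E[max_{σ ∈ S_N(α)} H(σ)]`, the expectation over the GOE matrix of the maximum of a
Hamiltonian `H` over the configuration space `S_N(α)`. -/
def Emax (N : ℕ) (α : ℚ) (H : ((Fin N × Fin N) → ℝ) → (Fin N → Bool) → ℝ) : ℝ :=
  ∫ ω, sSup ((H ω) '' SNset N α) ∂(goeMeasure N)

end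

/-- `α N` is a (nonnegative) integer. -/
def alphaIntegral (α : ℚ) (N : ℕ) : Prop := ∃ k : ℕ, α * (N : ℚ) = (k : ℚ)

open scoped NNReal

/-- One dimensional Gaussian integration by parts. -/
lemma gauss_ibp_one (v : ℝ≥0) (hv : v ≠ 0) (f f' : ℝ → ℝ) (C : ℝ)
    (hf : ∀ x, HasDerivAt f (f' x) x) (hc : Continuous f') (hb : ∀ x, |f x| ≤ C)
    (hb' : ∀ x, |f' x| ≤ C) :
    ∫ x, x * f x ∂(gaussianReal 0 v) = v * ∫ x, f' x ∂(gaussianReal 0 v) := by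
  have hcf : Continuous f := continuous_iff_continuousAt.2 fun x => (hf x).continuousAt
  have hvr : (v : ℝ) ≠ 0 := by exact_mod_cast hv
  set p := gaussianPDFReal 0 v with hp
  have hpd : ∀ x, HasDerivAt p (-(x / v) * p x) x := by
    intro x
    rw [hp, gaussianPDFReal_def]
    have h1 : HasDerivAt (fun x : ℝ => -(x - 0) ^ 2 / (2 * v)) (-(x / v)) x := by
      have := (((hasDerivAt_id x).sub_const 0).pow 2).neg.div_const (2 * (v : ℝ))
      convert! this using 1
      simp
      field_simp
    have := h1.exp.const_mul ((√(2 * Real.pi * v))⁻¹)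
    convert! this using 1
    ring
  have hpi : Integrable p := integrable_gaussianPDFReal 0 v
  have hxp : Integrable (fun x => x * p x) := by
    have h : Integrable (fun x : ℝ => x) (gaussianReal 0 v) := by
      exact memLp_one_iff_integrable.1 (memLp_id_gaussianReal' 1 (by simp))
    rw [gaussianReal_of_var_ne_zero 0 hv] at h
    have h2 := (integrable_withDensity_iff_integrable_smul' (measurable_gaussianPDF 0 v)
      (ae_of_all _ fun x => gaussianPDF_lt_top)).1 h
    refine h2.congr (ae_of_all _ fun x => ?_)
    simp [toReal_gaussianPDF, hp, mul_comm]
  have key := integral_mul_deriv_eq_deriv_mul_of_integrable (u := f) (u' := f') (v := p)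
    (v' := fun x => -(x / v) * p x) (fun x _ => hf x) (fun x _ => hpd x) ?_ ?_ ?_
  · rw [integral_gaussianReal_eq_integral_smul hv, integral_gaussianReal_eq_integral_smul hv]
    simp only [smul_eq_mul]
    have e1 : ∀ x, gaussianPDFReal 0 v x * (x * f x) = -v * (f x * (-(x / v) * p x)) := by
      intro x; rw [← hp]; field_simp
    have e2 : ∀ x, gaussianPDFReal 0 v x * f' x = f' x * p x := fun x => mul_comm _ _
    simp_rw [e1, e2]
    rw [integral_const_mul, key]; ring
  · have := (hxp.bdd_mul (c := C) hcf.aestronglyMeasurable (ae_of_all _ hb)).const_mul (-(v:ℝ)⁻¹)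
    refine this.congr (ae_of_all _ fun x => ?_)
    simp; field_simp
  · exact hpi.bdd_mul (c := C) hc.aestronglyMeasurable (ae_of_all _ hb')
  · exact hpi.bdd_mul (c := C) hcf.aestronglyMeasurable (ae_of_all _ hb)

/-- Resampling one coordinate preserves a product measure. -/
lemma resample_pi {ι : Type*} [Fintype ι] [DecidableEq ι] (m : ι → Measure ℝ)
    [∀ i, IsProbabilityMeasure (m i)] (k : ι) :
    MeasurePreserving (fun q : (ι → ℝ) × ℝ => Function.update q.1 k q.2)
      ((Measure.pi m).prod (m k)) (Measure.pi m) := by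
  have hm : Measurable (fun q : (ι → ℝ) × ℝ => Function.update q.1 k q.2) := by
    refine measurable_pi_lambda _ fun i => ?_
    by_cases h : i = k
    · subst h; simpa using measurable_snd
    · simp only [Function.update_of_ne h]; fun_prop
  refine ⟨hm, ?_⟩
  symm
  refine Measure.pi_eq fun s hs => ?_
  rw [Measure.map_apply hm (MeasurableSet.univ_pi hs)]
  have : (fun q : (ι → ℝ) × ℝ => Function.update q.1 k q.2) ⁻¹' (Set.univ.pi s)
      = (Set.univ.pi (Function.update s k Set.univ)) ×ˢ s k := by
    ext ⟨x, t⟩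
    simp only [Set.mem_preimage, Set.mem_pi, Set.mem_univ, true_implies, Set.mem_prod]
    constructor
    · intro h
      refine ⟨fun i => ?_, by simpa using h k⟩
      by_cases hi : i = k
      · subst hi; simp
      · simpa [Function.update_of_ne hi] using h i
    · rintro ⟨h1, h2⟩ i
      by_cases hi : i = k
      · subst hi; simpa using h2
      · simpa [Function.update_of_ne hi] using h1 i
  rw [this, Measure.prod_prod, Measure.pi_pi]
  rw [← Finset.mul_prod_erase _ _ (Finset.mem_univ k),
    ← Finset.mul_prod_erase (s := Finset.univ) (f := fun i => m i (s i)) (Finset.mem_univ k)]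
  simp only [Function.update_self, measure_univ, one_mul]
  rw [mul_comm]
  congr 1
  refine Finset.prod_congr rfl fun i hi => ?_
  rw [Function.update_of_ne (Finset.ne_of_mem_erase hi)]

/-- The product Gaussian measure with variances `v`. -/
noncomputable def gpi {ι : Type*} [Fintype ι] (v : ι → ℝ≥0) : Measure (ι → ℝ) :=
  Measure.pi fun k => gaussianReal 0 (v k)

instance {ι : Type*} [Fintype ι] (v : ι → ℝ≥0) : IsProbabilityMeasure (gpi v) := by
  unfold gpi; infer_instance

lemma integrable_coord {ι : Type*} [Fintype ι] (v : ι → ℝ≥0) (k : ι) :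
    Integrable (fun x : ι → ℝ => x k) (gpi v) := by
  have h : Integrable (fun x : ℝ => x) (gaussianReal 0 (v k)) := by
    exact memLp_one_iff_integrable.1 (memLp_id_gaussianReal' 1 (by simp))
  exact (measurePreserving_eval (fun k => gaussianReal 0 (v k)) k).integrable_comp_of_integrable h

/-- Gaussian integration by parts in one coordinate of a product. -/
lemma gauss_ibp_pi {ι : Type*} [Fintype ι] [DecidableEq ι] (v : ι → ℝ≥0) (hv : ∀ k, v k ≠ 0)
    (k : ι) (f f' : (ι → ℝ) → ℝ) (C : ℝ)
    (hf : ∀ x t, HasDerivAt (fun t => f (Function.update x k t)) (f' (Function.update x k t)) t)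
    (hcf : Continuous f) (hc : Continuous f') (hb : ∀ x, |f x| ≤ C)
    (hb' : ∀ x, |f' x| ≤ C) :
    ∫ x, x k * f x ∂(gpi v) = v k * ∫ x, f' x ∂(gpi v) := by
  have hp := resample_pi (fun k => gaussianReal 0 (v k)) k
  have hi1 : Integrable (fun x : ι → ℝ => x k * f x) (gpi v) :=
    (integrable_coord v k).mul_bdd (c := C) hcf.aestronglyMeasurable (ae_of_all _ hb)
  have hi2 : Integrable f' (gpi v) :=
    Integrable.of_bound hc.aestronglyMeasurable C (ae_of_all _ hb')
  have key : ∀ g : (ι → ℝ) → ℝ, Integrable g (gpi v) →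
      ∫ x, g x ∂(gpi v) = ∫ x, ∫ t, g (Function.update x k t) ∂(gaussianReal 0 (v k)) ∂(gpi v) := by
    intro g hg
    have h1 := hp.integrable_comp_of_integrable (g := g) hg
    have h2 := integral_prod _ h1
    unfold gpi at hg ⊢
    rw [← hp.map_eq] at hg
    conv_lhs => rw [← hp.map_eq]
    rw [integral_map hp.measurable.aemeasurable hg.aestronglyMeasurable]
    exact h2
  rw [key _ hi1, key _ hi2, ← integral_const_mul]
  refine integral_congr_ae (ae_of_all _ fun x => ?_)
  simp only [Function.update_self]
  refine gauss_ibp_one (v k) (hv k) (fun t => f (Function.update x k t))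
    (fun t => f' (Function.update x k t)) C (hf x) ?_ (fun t => hb _) (fun t => hb' _)
  exact hc.comp (continuous_const.update k continuous_id)


/-- Log-sum-exp. -/
noncomputable def lse {S : Type*} [Fintype S] (z : S → ℝ) : ℝ := Real.log (∑ a, Real.exp (z a))

/-- Softmax. -/
noncomputable def smx {S : Type*} [Fintype S] (z : S → ℝ) (a : S) : ℝ :=
  Real.exp (z a) / ∑ b, Real.exp (z b)

section softmax
variable {S : Type*} [Fintype S] [Nonempty S]

lemma sumexp_pos (z : S → ℝ) : 0 < ∑ b, Real.exp (z b) :=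
  Finset.sum_pos (fun _ _ => Real.exp_pos _) Finset.univ_nonempty

lemma smx_nonneg (z : S → ℝ) (a : S) : 0 ≤ smx z a :=
  div_nonneg (Real.exp_pos _).le (sumexp_pos z).le

lemma smx_sum (z : S → ℝ) : ∑ a, smx z a = 1 := by
  unfold smx
  rw [← Finset.sum_div, div_self (sumexp_pos z).ne']

lemma smx_le_one (z : S → ℝ) (a : S) : smx z a ≤ 1 := by
  rw [← smx_sum z]
  exact Finset.single_le_sum (fun b _ => smx_nonneg z b) (Finset.mem_univ a)

lemma smx_continuous (a : S) : Continuous (fun z : S → ℝ => smx z a) := by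
  unfold smx
  refine Continuous.div (by fun_prop) (by fun_prop) fun z => (sumexp_pos z).ne'

lemma lse_continuous : Continuous (fun z : S → ℝ => lse z) := by
  unfold lse
  exact Continuous.log (by fun_prop) fun z => (sumexp_pos z).ne'

lemma lse_hasDerivAt (z : ℝ → S → ℝ) (z' : S → ℝ) (t : ℝ)
    (h : ∀ a, HasDerivAt (fun t => z t a) (z' a) t) :
    HasDerivAt (fun t => lse (z t)) (∑ a, smx (z t) a * z' a) t := by
  unfold lse
  have := (HasDerivAt.fun_sum (u := Finset.univ) fun a _ => (h a).exp).log (sumexp_pos (z t)).ne'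
  convert! this using 1
  rw [Finset.sum_div]
  refine Finset.sum_congr rfl fun a _ => ?_
  unfold smx; ring

/-- derivative of softmax -/
noncomputable def dsmx [DecidableEq S] (z : S → ℝ) (a b : S) : ℝ :=
  smx z a * ((if a = b then 1 else 0) - smx z b)

lemma dsmx_abs [DecidableEq S] (z : S → ℝ) (a b : S) : |dsmx z a b| ≤ 1 := by
  unfold dsmx
  have h1 := smx_nonneg z a
  have h2 := smx_nonneg z b
  have h3 := smx_le_one z a
  have h4 := smx_le_one z b
  rw [abs_mul, abs_of_nonneg h1]
  have : |(if a = b then (1:ℝ) else 0) - smx z b| ≤ 1 := by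
    rw [abs_le]; split_ifs <;> constructor <;> linarith
  calc _ ≤ 1 * 1 := mul_le_mul h3 this (abs_nonneg _) zero_le_one
    _ = 1 := one_mul 1

lemma dsmx_continuous [DecidableEq S] (a b : S) : Continuous (fun z : S → ℝ => dsmx z a b) := by
  unfold dsmx
  exact (smx_continuous a).mul (continuous_const.sub (smx_continuous b))

lemma smx_hasDerivAt [DecidableEq S] (z : ℝ → S → ℝ) (z' : S → ℝ) (t : ℝ)
    (h : ∀ a, HasDerivAt (fun t => z t a) (z' a) t) (a : S) :
    HasDerivAt (fun t => smx (z t) a) (∑ b, dsmx (z t) a b * z' b) t := by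
  have h1 := (h a).exp.div (HasDerivAt.fun_sum (u := Finset.univ) fun a _ => (h a).exp)
    (sumexp_pos (z t)).ne'
  have e : ∑ b, dsmx (z t) a b * z' b
      = smx (z t) a * (z' a - ∑ b, smx (z t) b * z' b) := by
    unfold dsmx
    simp only [mul_assoc, ← Finset.mul_sum, sub_mul, Finset.sum_sub_distrib]
    simp
  rw [e]
  unfold smx
  convert! h1 using 1
  have hp := (sumexp_pos (z t)).ne'
  have : ∑ b, Real.exp (z t b) / (∑ c, Real.exp (z t c)) * z' b
      = (∑ b, Real.exp (z t b) * z' b) / (∑ c, Real.exp (z t c)) := by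
    rw [Finset.sum_div]
    exact Finset.sum_congr rfl fun b _ => by ring
  rw [this]
  field_simp

lemma iSup_le_lse (z : S → ℝ) : ⨆ a, z a ≤ lse z := by
  refine ciSup_le fun a => ?_
  unfold lse
  rw [Real.le_log_iff_exp_le (sumexp_pos z)]
  exact Finset.single_le_sum (f := fun b => Real.exp (z b))
    (fun b _ => (Real.exp_pos _).le) (Finset.mem_univ a)

lemma lse_le_iSup (z : S → ℝ) : lse z ≤ (⨆ a, z a) + Real.log (Fintype.card S) := by
  unfold lse
  have hc : (0:ℝ) < Fintype.card S := by exact_mod_cast Fintype.card_pos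
  rw [Real.log_le_iff_le_exp (sumexp_pos z), Real.exp_add, Real.exp_log hc]
  calc ∑ a, Real.exp (z a) ≤ ∑ _a : S, Real.exp (⨆ a, z a) :=
        Finset.sum_le_sum fun a _ => Real.exp_le_exp.2 (le_ciSup (Set.finite_range z).bddAbove a)
    _ = _ := by simp [mul_comm]

lemma abs_iSup_le (z : S → ℝ) : |⨆ a, z a| ≤ ∑ a, |z a| := by
  obtain ⟨a, ha⟩ := exists_eq_ciSup_of_finite (f := z)
  rw [← ha]
  exact Finset.single_le_sum (f := fun b => |z b|) (fun b _ => abs_nonneg _) (Finset.mem_univ a)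

lemma abs_lse_le (z : S → ℝ) : |lse z| ≤ (∑ a, |z a|) + Real.log (Fintype.card S) := by
  have h1 := iSup_le_lse z
  have h2 := lse_le_iSup z
  have h3 := abs_le.1 (abs_iSup_le z)
  have h4 : 0 ≤ Real.log (Fintype.card S) := Real.log_natCast_nonneg _
  rw [abs_le]; constructor <;> linarith

lemma measurable_iSup_real {Ω : Type*} [MeasurableSpace Ω] (X : Ω → S → ℝ)
    (h : ∀ a, Measurable fun ω => X ω a) : Measurable fun ω => ⨆ a, X ω a :=
  Measurable.iSup h

lemma dsmx_quad [DecidableEq S] (z : S → ℝ) (D : S → S → ℝ)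
    (hD : ∀ a b, 0 ≤ D a a + D b b - 2 * D a b) :
    0 ≤ ∑ a, ∑ b, D a b * dsmx z a b := by
  have e : ∑ a, ∑ b, D a b * dsmx z a b
      = (1/2) * ∑ a, ∑ b, smx z a * smx z b * (D a a + D b b - 2 * D a b) := by
    have h1 : ∑ a, ∑ b, smx z a * smx z b * D a a = ∑ a, smx z a * D a a := by
      refine Finset.sum_congr rfl fun a _ => ?_
      rw [← Finset.sum_mul, ← Finset.mul_sum, smx_sum, mul_one]
    have h2 : ∑ a, ∑ b, smx z a * smx z b * D b b = ∑ a, smx z a * D a a := by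
      rw [Finset.sum_comm]
      refine Finset.sum_congr rfl fun a _ => ?_
      rw [← Finset.sum_mul, ← Finset.sum_mul, smx_sum, one_mul]
    have h3 : ∑ a, ∑ b, D a b * dsmx z a b
        = ∑ a, smx z a * D a a - ∑ a, ∑ b, smx z a * smx z b * D a b := by
      rw [← Finset.sum_sub_distrib]
      refine Finset.sum_congr rfl fun a _ => ?_
      unfold dsmx
      have : ∀ b, D a b * (smx z a * ((if a = b then 1 else 0) - smx z b))
        = (if a = b then smx z a * D a b else 0) - smx z a * smx z b * D a b := by
        intro b; split_ifs <;> ring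
      simp_rw [this]
      rw [Finset.sum_sub_distrib]
      simp
    have h4 : ∑ a, ∑ b, smx z a * smx z b * (D a a + D b b - 2 * D a b)
        = ∑ a, ∑ b, smx z a * smx z b * D a a + ∑ a, ∑ b, smx z a * smx z b * D b b
          - 2 * ∑ a, ∑ b, smx z a * smx z b * D a b := by
      simp only [Finset.mul_sum, ← Finset.sum_add_distrib, ← Finset.sum_sub_distrib]
      refine Finset.sum_congr rfl fun a _ => Finset.sum_congr rfl fun b _ => ?_
      ring
    rw [h4, h1, h2, h3]; ring
  rw [e]
  refine mul_nonneg (by norm_num) (Finset.sum_nonneg fun a _ => Finset.sum_nonneg fun b _ => ?_)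
  exact mul_nonneg (mul_nonneg (smx_nonneg z a) (smx_nonneg z b)) (hD a b)

end softmax

section SF
variable {S : Type*} [Fintype S] {ι κ : Type*} [Fintype ι] [Fintype κ]

/-- Linear functionals. -/
def lin (A : S → ι → ℝ) (x : ι → ℝ) (a : S) : ℝ := ∑ k, A a k * x k

/-- Covariance of the linear functionals. -/
def lcov (v : ι → ℝ≥0) (A : S → ι → ℝ) (a b : S) : ℝ := ∑ k, (v k : ℝ) * (A a k * A b k)

lemma lin_continuous (A : S → ι → ℝ) (a : S) : Continuous fun x => lin A x a := by
  unfold lin; fun_prop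

lemma lin_integrable (v : ι → ℝ≥0) (A : S → ι → ℝ) (a : S) :
    Integrable (fun x => lin A x a) (gpi v) := by
  unfold lin
  exact integrable_finsetSum _ fun k _ => (integrable_coord v k).const_mul _

variable [Nonempty S]

lemma smx_ibp [DecidableEq S] (v : ι → ℝ≥0) (hv : ∀ k, v k ≠ 0) (A : S → ι → ℝ)
    (c : ℝ) (w : S → ℝ) (a : S) :
    ∫ x, lin A x a * smx (fun b => c * lin A x b + w b) a ∂(gpi v)
      = c * ∑ b, lcov v A a b * ∫ x, dsmx (fun b => c * lin A x b + w b) a b ∂(gpi v) := by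
  classical
  have hcz : Continuous fun (x : ι → ℝ) (b : S) => c * lin A x b + w b :=
    continuous_pi fun b => ((lin_continuous A b).const_mul c).add_const _
  have hid : ∀ b, Integrable (fun x => dsmx (fun b => c * lin A x b + w b) a b) (gpi v) :=
    fun b => Integrable.of_bound ((dsmx_continuous a b).comp hcz).aestronglyMeasurable 1
      (ae_of_all _ fun x => dsmx_abs _ _ _)
  have hk : ∀ k, ∫ x, x k * smx (fun b => c * lin A x b + w b) a ∂(gpi v)
      = v k * ∫ x, ∑ b, dsmx (fun b => c * lin A x b + w b) a b * (c * A b k) ∂(gpi v) := by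
    intro k
    refine gauss_ibp_pi v hv k (fun x => smx (fun b => c * lin A x b + w b) a) _
      (1 + ∑ b, |c * A b k|) ?_ ((smx_continuous a).comp hcz) ?_ ?_ ?_
    · intro x t
      refine smx_hasDerivAt (fun t b => c * lin A (Function.update x k t) b + w b) _ t ?_ a
      intro b
      refine HasDerivAt.add_const _ (HasDerivAt.const_mul c ?_)
      unfold lin
      have : ∀ l ∈ (Finset.univ : Finset ι), HasDerivAt
          (fun t => A b l * Function.update x k t l) (if l = k then A b l else 0) t := by
        intro l _
        by_cases h : l = k
        · subst h
          simpa using (hasDerivAt_id t).const_mul (A b l)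
        · simpa [Function.update_of_ne h, h] using hasDerivAt_const t (A b l * x l)
      simpa using HasDerivAt.fun_sum this
    · exact continuous_finsetSum _ fun b _ => ((dsmx_continuous a b).comp hcz).mul_const _
    · intro x
      have h1 := smx_nonneg (fun b => c * lin A x b + w b) a
      have h2 := smx_le_one (fun b => c * lin A x b + w b) a
      have h3 : 0 ≤ ∑ b, |c * A b k| := Finset.sum_nonneg fun b _ => abs_nonneg _
      rw [abs_of_nonneg h1]; linarith
    · intro x
      refine (Finset.abs_sum_le_sum_abs _ _).trans ?_
      have : ∑ b, |dsmx (fun b => c * lin A x b + w b) a b * (c * A b k)| ≤ ∑ b, |c * A b k| := by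
        refine Finset.sum_le_sum fun b _ => ?_
        rw [abs_mul]
        exact mul_le_of_le_one_left (abs_nonneg _) (dsmx_abs _ _ _)
      linarith
  have hki : ∀ k, Integrable (fun x => x k * smx (fun b => c * lin A x b + w b) a) (gpi v) :=
    fun k => (integrable_coord v k).mul_bdd (c := 1)
      ((smx_continuous a).comp hcz).aestronglyMeasurable
      (ae_of_all _ fun x => by
        rw [Real.norm_eq_abs, abs_of_nonneg (smx_nonneg _ _)]; exact smx_le_one _ _)
  have e1 : ∀ x, lin A x a * smx (fun b => c * lin A x b + w b) a
      = ∑ k, A a k * (x k * smx (fun b => c * lin A x b + w b) a) := by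
    intro x
    conv_lhs => enter [1]; unfold lin
    rw [Finset.sum_mul]
    exact Finset.sum_congr rfl fun k _ => by ring
  simp_rw [e1]
  rw [integral_finsetSum _ fun k _ => (hki k).const_mul _]
  simp_rw [integral_const_mul, hk]
  have e2 : ∀ k, ∫ x, ∑ b, dsmx (fun b => c * lin A x b + w b) a b * (c * A b k) ∂(gpi v)
      = ∑ b, (∫ x, dsmx (fun b => c * lin A x b + w b) a b ∂(gpi v)) * (c * A b k) := by
    intro k
    rw [integral_finsetSum _ fun b _ => (hid b).mul_const _]
    simp_rw [integral_mul_const]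
  simp_rw [e2]
  unfold lcov
  simp only [Finset.mul_sum, Finset.sum_mul]
  rw [Finset.sum_comm]
  exact Finset.sum_congr rfl fun b _ => Finset.sum_congr rfl fun k _ => by ring

set_option maxHeartbeats 1600000 in
/-- Sudakov-Fernique for log-sum-exp. -/
lemma sf_lse (v : ι → ℝ≥0) (hv : ∀ k, v k ≠ 0) (w : κ → ℝ≥0) (hw : ∀ k, w k ≠ 0)
    (A : S → ι → ℝ) (B : S → κ → ℝ)
    (h : ∀ a b, lcov v A a a + lcov v A b b - 2 * lcov v A a b
      ≤ lcov w B a a + lcov w B b b - 2 * lcov w B a b) :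
    ∫ x, lse (lin A x) ∂(gpi v) ≤ ∫ y, lse (lin B y) ∂(gpi w) := by
  classical
  set P := (gpi v).prod (gpi w) with hP
  let Z : ℝ → (ι → ℝ) × (κ → ℝ) → S → ℝ :=
    fun θ q b => Real.cos θ * lin A q.1 b + Real.sin θ * lin B q.2 b
  have hAi : ∀ a, Integrable (fun q : (ι → ℝ) × (κ → ℝ) => lin A q.1 a) P :=
    fun a => (lin_integrable v A a).comp_fst _
  have hBi : ∀ a, Integrable (fun q : (ι → ℝ) × (κ → ℝ) => lin B q.2 a) P :=
    fun a => (lin_integrable w B a).comp_snd _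
  have hZc : ∀ θ, Continuous (Z θ) := fun θ => continuous_pi fun b =>
    (((lin_continuous A b).comp continuous_fst).const_mul _).add
      (((lin_continuous B b).comp continuous_snd).const_mul _)
  have hbi : Integrable (fun q : (ι → ℝ) × (κ → ℝ) => ∑ a, (|lin A q.1 a| + |lin B q.2 a|)) P :=
    integrable_finsetSum _ fun a _ => (hAi a).abs.add (hBi a).abs
  have hs1 : ∀ z : S → ℝ, ∀ a, ‖smx z a‖ ≤ 1 := fun z a => by
    rw [Real.norm_eq_abs, abs_of_nonneg (smx_nonneg _ _)]; exact smx_le_one _ _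
  have hL : ∀ θ, Integrable (fun q => lse (Z θ q)) P := by
    intro θ
    refine Integrable.mono' (hbi.add (integrable_const (Real.log (Fintype.card S))))
      (lse_continuous.comp (hZc θ)).aestronglyMeasurable (ae_of_all _ fun q => ?_)
    refine (abs_lse_le _).trans ?_
    simp only [Pi.add_apply]
    gcongr with a
    refine (abs_add_le _ _).trans ?_
    rw [abs_mul, abs_mul]
    gcongr
    · exact mul_le_of_le_one_left (abs_nonneg _) (Real.abs_cos_le_one θ)
    · exact mul_le_of_le_one_left (abs_nonneg _) (Real.abs_sin_le_one θ)
  let F' : ℝ → (ι → ℝ) × (κ → ℝ) → ℝ := fun θ q =>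
    ∑ a, smx (Z θ q) a * (-Real.sin θ * lin A q.1 a + Real.cos θ * lin B q.2 a)
  have hder : ∀ θ, HasDerivAt (fun θ => ∫ q, lse (Z θ q) ∂P) (∫ q, F' θ q ∂P) θ := by
    intro θ
    refine (hasDerivAt_integral_of_dominated_loc_of_deriv_le (s := Set.univ) (μ := P)
      (F := fun θ q => lse (Z θ q)) (F' := F') (x₀ := θ)
      (bound := fun q => ∑ a, (|lin A q.1 a| + |lin B q.2 a|)) Filter.univ_mem
      (Filter.Eventually.of_forall fun θ => (hL θ).aestronglyMeasurable) (hL θ) ?_ ?_ hbi ?_).2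
    · refine Continuous.aestronglyMeasurable ?_
      refine continuous_finsetSum _ fun a _ => ((smx_continuous a).comp (hZc θ)).mul ?_
      exact (((lin_continuous A a).comp continuous_fst).const_mul _).add
        (((lin_continuous B a).comp continuous_snd).const_mul _)
    · refine ae_of_all _ fun q θ _ => ?_
      refine (norm_sum_le _ _).trans (Finset.sum_le_sum fun a _ => ?_)
      rw [norm_mul]
      refine (mul_le_of_le_one_left (norm_nonneg _) (hs1 _ _)).trans ?_
      refine (abs_add_le _ _).trans ?_
      rw [abs_mul, abs_mul, abs_neg]
      gcongr
      · exact mul_le_of_le_one_left (abs_nonneg _) (Real.abs_sin_le_one θ)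
      · exact mul_le_of_le_one_left (abs_nonneg _) (Real.abs_cos_le_one θ)
    · refine ae_of_all _ fun q θ _ => ?_
      refine lse_hasDerivAt (fun θ => Z θ q) _ θ fun a => ?_
      exact ((Real.hasDerivAt_cos θ).mul_const _).add ((Real.hasDerivAt_sin θ).mul_const _)
  have hsA : ∀ θ a, Integrable (fun q => lin A q.1 a * smx (Z θ q) a) P := fun θ a =>
    (hAi a).mul_bdd (c := 1) ((smx_continuous a).comp (hZc θ)).aestronglyMeasurable
      (ae_of_all _ fun q => hs1 _ _)
  have hsB : ∀ θ a, Integrable (fun q => lin B q.2 a * smx (Z θ q) a) P := fun θ a =>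
    (hBi a).mul_bdd (c := 1) ((smx_continuous a).comp (hZc θ)).aestronglyMeasurable
      (ae_of_all _ fun q => hs1 _ _)
  have hD : ∀ θ a b, Integrable (fun q => dsmx (Z θ q) a b) P := fun θ a b =>
    Integrable.of_bound ((dsmx_continuous a b).comp (hZc θ)).aestronglyMeasurable 1
      (ae_of_all _ fun x => dsmx_abs _ _ _)
  have hA : ∀ θ a, ∫ q, lin A q.1 a * smx (Z θ q) a ∂P
      = Real.cos θ * ∑ b, lcov v A a b * ∫ q, dsmx (Z θ q) a b ∂P := by
    intro θ a
    rw [hP, integral_prod_symm _ (hsA θ a)]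
    have : ∀ y, ∫ x, lin A x a * smx (Z θ (x, y)) a ∂(gpi v)
        = Real.cos θ * ∑ b, lcov v A a b * ∫ x, dsmx (Z θ (x, y)) a b ∂(gpi v) := fun y =>
      smx_ibp v hv A (Real.cos θ) (fun b => Real.sin θ * lin B y b) a
    simp_rw [this]
    rw [integral_const_mul, integral_finsetSum _ fun b _ => ((hD θ a b).integral_prod_right).const_mul _]
    congr 1
    refine Finset.sum_congr rfl fun b _ => ?_
    rw [integral_const_mul, integral_prod_symm _ (hD θ a b)]
  have hB : ∀ θ a, ∫ q, lin B q.2 a * smx (Z θ q) a ∂P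
      = Real.sin θ * ∑ b, lcov w B a b * ∫ q, dsmx (Z θ q) a b ∂P := by
    intro θ a
    rw [hP, integral_prod _ (hsB θ a)]
    have : ∀ x, ∫ y, lin B y a * smx (Z θ (x, y)) a ∂(gpi w)
        = Real.sin θ * ∑ b, lcov w B a b * ∫ y, dsmx (Z θ (x, y)) a b ∂(gpi w) := fun x => by
      have := smx_ibp w hw B (Real.sin θ) (fun b => Real.cos θ * lin A x b) a
      simp only [Z]
      simpa only [add_comm] using this
    simp_rw [this]
    rw [integral_const_mul, integral_finsetSum _ fun b _ => ((hD θ a b).integral_prod_left).const_mul _]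
    congr 1
    refine Finset.sum_congr rfl fun b _ => ?_
    rw [integral_const_mul, integral_prod _ (hD θ a b)]
  have hF' : ∀ θ, ∫ q, F' θ q ∂P = Real.sin θ * Real.cos θ *
      ∫ q, ∑ a, ∑ b, (lcov w B a b - lcov v A a b) * dsmx (Z θ q) a b ∂P := by
    intro θ
    have e1 : ∀ q, F' θ q = ∑ a, (-Real.sin θ * (lin A q.1 a * smx (Z θ q) a)
        + Real.cos θ * (lin B q.2 a * smx (Z θ q) a)) := fun q =>
      Finset.sum_congr rfl fun a _ => by ring
    simp_rw [e1]
    rw [integral_finsetSum _ fun a _ => ((hsA θ a).const_mul _).fun_add ((hsB θ a).const_mul _),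
      integral_finsetSum _ fun a _ => integrable_finsetSum _ fun b _ => (hD θ a b).const_mul _,
      Finset.mul_sum]
    refine Finset.sum_congr rfl fun a _ => ?_
    rw [integral_add ((hsA θ a).const_mul _) ((hsB θ a).const_mul _), integral_const_mul,
      integral_const_mul, hA, hB, integral_finsetSum _ fun b _ => (hD θ a b).const_mul _]
    simp_rw [integral_const_mul, sub_mul]
    rw [Finset.sum_sub_distrib]
    ring
  have hmono : MonotoneOn (fun θ => ∫ q, lse (Z θ q) ∂P) (Set.Icc 0 (Real.pi / 2)) := by
    refine monotoneOn_of_deriv_nonneg (convex_Icc _ _)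
      (fun θ _ => (hder θ).continuousAt.continuousWithinAt)
      (fun θ _ => (hder θ).differentiableAt.differentiableWithinAt) fun θ hθ => ?_
    rw [interior_Icc] at hθ
    rw [(hder θ).deriv, hF']
    refine mul_nonneg (mul_nonneg ?_ ?_) (integral_nonneg fun q => ?_)
    · exact Real.sin_nonneg_of_nonneg_of_le_pi hθ.1.le (by linarith [hθ.2, Real.pi_pos])
    · exact Real.cos_nonneg_of_neg_pi_div_two_le_of_le (by linarith [hθ.1, Real.pi_pos]) hθ.2.le
    · exact dsmx_quad (Z θ q) (fun a b => lcov w B a b - lcov v A a b) fun a b => by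
        have := h a b
        linarith
  have hfin := hmono (Set.left_mem_Icc.2 (by positivity)) (Set.right_mem_Icc.2 (by positivity))
    (by positivity)
  have z0 : ∀ q, Z 0 q = lin A q.1 := fun q => by funext b; simp [Z]
  have z1 : ∀ q, Z (Real.pi / 2) q = lin B q.2 := fun q => by funext b; simp [Z]
  simp only [z0, z1] at hfin
  rw [hP, integral_fun_fst (fun x => lse (lin A x)), integral_fun_snd (fun y => lse (lin B y))] at hfin
  simpa using hfin

lemma lin_iSup_integrable (v : ι → ℝ≥0) (A : S → ι → ℝ) :
    Integrable (fun x => ⨆ a, lin A x a) (gpi v) := by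
  refine Integrable.mono' (integrable_finsetSum Finset.univ fun a _ => (lin_integrable v A a).abs)
    (measurable_iSup_real _ fun a => (lin_continuous A a).measurable).aestronglyMeasurable
    (ae_of_all _ fun x => abs_iSup_le _)

lemma lin_lse_integrable (v : ι → ℝ≥0) (A : S → ι → ℝ) :
    Integrable (fun x => lse (lin A x)) (gpi v) := by
  refine Integrable.mono' ((integrable_finsetSum Finset.univ
      fun a _ => (lin_integrable v A a).abs).add (integrable_const (Real.log (Fintype.card S))))
    (lse_continuous.comp (continuous_pi fun a => lin_continuous A a)).aestronglyMeasurable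
    (ae_of_all _ fun x => abs_lse_le _)

/-- Sudakov-Fernique inequality. -/
lemma sudakov_fernique (v : ι → ℝ≥0) (hv : ∀ k, v k ≠ 0) (w : κ → ℝ≥0) (hw : ∀ k, w k ≠ 0)
    (A : S → ι → ℝ) (B : S → κ → ℝ)
    (h : ∀ a b, lcov v A a a + lcov v A b b - 2 * lcov v A a b
      ≤ lcov w B a a + lcov w B b b - 2 * lcov w B a b) :
    ∫ x, ⨆ a, lin A x a ∂(gpi v) ≤ ∫ y, ⨆ a, lin B y a ∂(gpi w) := by
  have key : ∀ β : ℝ, 0 < β → β * ∫ x, ⨆ a, lin A x a ∂(gpi v)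
      ≤ β * ∫ y, ⨆ a, lin B y a ∂(gpi w) + Real.log (Fintype.card S) := by
    intro β hβ
    have l1 : ∀ x a, lin (fun a k => β * A a k) x a = β * lin A x a := fun x a => by
      unfold lin; rw [Finset.mul_sum]; exact Finset.sum_congr rfl fun k _ => by ring
    have l2 : ∀ x a, lin (fun a k => β * B a k) x a = β * lin B x a := fun x a => by
      unfold lin; rw [Finset.mul_sum]; exact Finset.sum_congr rfl fun k _ => by ring
    have c1 : ∀ a b, lcov v (fun a k => β * A a k) a b = β ^ 2 * lcov v A a b := fun a b => by
      unfold lcov; rw [Finset.mul_sum]; exact Finset.sum_congr rfl fun k _ => by ring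
    have c2 : ∀ a b, lcov w (fun a k => β * B a k) a b = β ^ 2 * lcov w B a b := fun a b => by
      unfold lcov; rw [Finset.mul_sum]; exact Finset.sum_congr rfl fun k _ => by ring
    have h1 := sf_lse v hv w hw (fun a k => β * A a k) (fun a k => β * B a k) (fun a b => by
      rw [c1, c1, c1, c2, c2, c2]
      have := mul_le_mul_of_nonneg_left (h a b) (sq_nonneg β)
      linarith)
    have h2 : ∫ x, ⨆ a, lin (fun a k => β * A a k) x a ∂(gpi v)
        ≤ ∫ x, lse (lin (fun a k => β * A a k) x) ∂(gpi v) :=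
      integral_mono (lin_iSup_integrable _ _) (lin_lse_integrable _ _) fun x => iSup_le_lse _
    have h3 : ∫ x, lse (lin (fun a k => β * B a k) x) ∂(gpi w)
        ≤ ∫ x, ((⨆ a, lin (fun a k => β * B a k) x a) + Real.log (Fintype.card S)) ∂(gpi w) :=
      integral_mono (lin_lse_integrable _ _)
        ((lin_iSup_integrable _ _).add (integrable_const _)) fun x => lse_le_iSup _
    rw [integral_add (lin_iSup_integrable _ _) (integrable_const _)] at h3
    simp only [l1] at h2
    simp only [l2] at h3
    simp_rw [← Real.mul_iSup_of_nonneg hβ.le] at h2 h3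
    rw [integral_const_mul] at h2 h3
    simp only [integral_const, probReal_univ, one_smul] at h3
    have e1 : ∀ x, lse (lin (fun a k => β * A a k) x) = lse (fun a => β * lin A x a) := fun x => by
      congr 1; funext a; exact l1 x a
    have e2 : ∀ x, lse (lin (fun a k => β * B a k) x) = lse (fun a => β * lin B x a) := fun x => by
      congr 1; funext a; exact l2 x a
    linarith
  by_contra hlt
  push Not at hlt
  set X := ∫ x, ⨆ a, lin A x a ∂(gpi v)
  set Y := ∫ y, ⨆ a, lin B y a ∂(gpi w)
  have hL : 0 ≤ Real.log (Fintype.card S) := Real.log_natCast_nonneg _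
  have hd : 0 < X - Y := by linarith
  have := key ((Real.log (Fintype.card S) + 1) / (X - Y)) (by positivity)
  have e : (Real.log (Fintype.card S) + 1) / (X - Y) * (X - Y) = Real.log (Fintype.card S) + 1 :=
    div_mul_cancel₀ _ hd.ne'
  rw [mul_sub] at e
  linarith

end SF

section model

/-- GOE variances. -/
noncomputable def vgoe (N : ℕ) : Fin N × Fin N → ℝ≥0 := fun p => if p.1 = p.2 then 2 else 1

lemma vgoe_ne (N : ℕ) (p : Fin N × Fin N) : vgoe N p ≠ 0 := by
  unfold vgoe; split_ifs <;> norm_num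

lemma goe_eq (N : ℕ) : goeMeasure N = gpi (vgoe N) := rfl

lemma symm_sum {N : ℕ} (G : Fin N → Fin N → ℝ) (hG : ∀ i j, G i j = G j i) :
    ∑ i, ∑ j, G i j = ∑ i, ∑ j, (if i < j then 2 * G i j else if i = j then G i j else 0) := by
  have h1 : ∀ i j, G i j = (if i < j then G i j else 0) + (if j < i then G i j else 0)
      + (if i = j then G i j else 0) := by
    intro i j
    rcases lt_trichotomy i j with h | h | h
    · simp [h, h.ne, h.not_gt]
    · simp [h]
    · simp [h, h.ne', h.not_gt]
  have h2 : ∑ i, ∑ j, (if j < i then G i j else 0) = ∑ i, ∑ j, (if i < j then G i j else 0) := by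
    rw [Finset.sum_comm]
    refine Finset.sum_congr rfl fun i _ => Finset.sum_congr rfl fun j _ => ?_
    rw [hG]
  have h3 : ∑ i, ∑ j, G i j = ∑ i, ∑ j, (if i < j then G i j else 0)
      + ∑ i, ∑ j, (if j < i then G i j else 0) + ∑ i, ∑ j, (if i = j then G i j else 0) := by
    simp only [← Finset.sum_add_distrib]
    exact Finset.sum_congr rfl fun i _ => Finset.sum_congr rfl fun j _ => h1 i j
  rw [h3, h2]
  simp only [← Finset.sum_add_distrib]
  refine Finset.sum_congr rfl fun i _ => Finset.sum_congr rfl fun j _ => ?_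
  rcases lt_trichotomy i j with h | h | h
  · simp [h, h.ne]; ring
  · simp [h]
  · simp [h.ne', h.not_gt]

/-- Coefficients of the quadratic form. -/
noncomputable def cq {N : ℕ} (u : Fin N → ℝ) (p : Fin N × Fin N) : ℝ :=
  (Real.sqrt N)⁻¹ *
    (if p.1 < p.2 then 2 * (u p.1 * u p.2) else if p.1 = p.2 then u p.1 * u p.2 else 0)

lemma Jmat_symm {N : ℕ} (ω : (Fin N × Fin N) → ℝ) (i j : Fin N) : Jmat ω i j = Jmat ω j i := by
  unfold Jmat
  rcases lt_trichotomy i j with h | h | h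
  · simp [h.le, h.not_ge]
  · simp [h]
  · simp [h.le, h.not_ge]

lemma quad_lin {N : ℕ} (u : Fin N → ℝ) (ω : (Fin N × Fin N) → ℝ) :
    (Real.sqrt N)⁻¹ * ∑ i, ∑ j, Jmat ω i j * u i * u j = ∑ p, cq u p * ω p := by
  rw [symm_sum _ fun i j => by rw [Jmat_symm]; ring, Fintype.sum_prod_type]
  simp only [Finset.mul_sum]
  refine Finset.sum_congr rfl fun i _ => Finset.sum_congr rfl fun j _ => ?_
  unfold cq Jmat
  rcases lt_trichotomy i j with h | h | h
  · simp [h, h.le]; ring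
  · simp [h]; ring
  · simp [h.ne', h.not_gt]

lemma cq_cov {N : ℕ} (u w : Fin N → ℝ) :
    ∑ p, (vgoe N p : ℝ) * (cq u p * cq w p) = 2 * (N : ℝ)⁻¹ * (∑ i, u i * w i) ^ 2 := by
  have hs : (Real.sqrt N)⁻¹ * (Real.sqrt N)⁻¹ = (N : ℝ)⁻¹ := by
    rw [← mul_inv, Real.mul_self_sqrt (Nat.cast_nonneg N)]
  rw [sq, Finset.sum_mul_sum, symm_sum _ fun i j => by ring, Fintype.sum_prod_type]
  simp only [Finset.mul_sum]
  refine Finset.sum_congr rfl fun i _ => Finset.sum_congr rfl fun j _ => ?_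
  rw [← hs]
  unfold cq vgoe
  rcases lt_trichotomy i j with h | h | h
  · simp [h, h.ne]; ring
  · simp [h]; ring
  · simp [h.ne', h.not_gt]

lemma H0_lin {N : ℕ} (ω : (Fin N × Fin N) → ℝ) (σ : Fin N → Bool) :
    H0 ω σ = ∑ p, cq (fun i => spin (σ i)) p * ω p := by
  rw [← quad_lin]; rfl

lemma H1_lin {N : ℕ} (α : ℚ) (ω : (Fin N × Fin N) → ℝ) (σ : Fin N → Bool) :
    H1 α ω σ = ∑ p, cq (fun i => spin (σ i) - (2 * (α : ℝ) - 1)) p * ω p := by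
  rw [← quad_lin]
  unfold H1 H0 gvec
  set m := 2 * (α : ℝ) - 1
  set s := (Real.sqrt N)⁻¹
  have e1 : ∑ i, s * (∑ j, Jmat ω i j) * spin (σ i) = s * ∑ i, ∑ j, Jmat ω i j * spin (σ i) := by
    rw [Finset.mul_sum]
    refine Finset.sum_congr rfl fun i _ => ?_
    rw [mul_assoc, Finset.sum_mul]
  have e2 : ∑ i, ∑ j, Jmat ω i j * spin (σ j) = ∑ i, ∑ j, Jmat ω i j * spin (σ i) := by
    rw [Finset.sum_comm]
    refine Finset.sum_congr rfl fun i _ => Finset.sum_congr rfl fun j _ => ?_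
    rw [Jmat_symm]
  have e3 : ∑ i, ∑ j, Jmat ω i j * (spin (σ i) - m) * (spin (σ j) - m)
      = ∑ i, ∑ j, Jmat ω i j * spin (σ i) * spin (σ j) - m * ∑ i, ∑ j, Jmat ω i j * spin (σ i)
        - m * ∑ i, ∑ j, Jmat ω i j * spin (σ j) + m ^ 2 * ∑ i, ∑ j, Jmat ω i j := by
    simp only [Finset.mul_sum, ← Finset.sum_add_distrib, ← Finset.sum_sub_distrib]
    refine Finset.sum_congr rfl fun i _ => Finset.sum_congr rfl fun j _ => ?_
    ring
  rw [e1, e3, e2]; ring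

/-- unnormalized overlap -/
noncomputable def ovl {n : ℕ} (σ τ : Fin n → Bool) : ℝ := ∑ i, spin (σ i) * spin (τ i)

lemma spin_sq (b : Bool) : spin b * spin b = 1 := by cases b <;> simp [spin]

lemma ovl_self {n : ℕ} (σ : Fin n → Bool) : ovl σ σ = n := by simp [ovl, spin_sq]

lemma spin_mul_abs (b c : Bool) : |spin b * spin c| = 1 := by cases b <;> cases c <;> simp [spin]

lemma ovl_abs {n : ℕ} (σ τ : Fin n → Bool) : |ovl σ τ| ≤ n := by
  unfold ovl
  refine (Finset.abs_sum_le_sum_abs _ _).trans ?_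
  simp only [spin_mul_abs]
  simp

lemma ovl_shift {N : ℕ} {α : ℚ} {σ τ : Fin N → Bool} (hσ : σ ∈ SNset N α) (hτ : τ ∈ SNset N α) :
    ∑ i, (spin (σ i) - (2 * (α : ℝ) - 1)) * (spin (τ i) - (2 * (α : ℝ) - 1))
      = ovl σ τ - N * (2 * (α : ℝ) - 1) ^ 2 := by
  have h1 : ∑ i, spin (σ i) = (N : ℝ) * (2 * (α : ℝ) - 1) := hσ
  have h2 : ∑ i, spin (τ i) = (N : ℝ) * (2 * (α : ℝ) - 1) := hτ
  set m := 2 * (α : ℝ) - 1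
  have : ∀ i, (spin (σ i) - m) * (spin (τ i) - m)
      = spin (σ i) * spin (τ i) - m * spin (σ i) - m * spin (τ i) + m ^ 2 := fun i => by ring
  simp_rw [this]
  rw [Finset.sum_add_distrib, Finset.sum_sub_distrib, Finset.sum_sub_distrib, ← Finset.mul_sum,
    ← Finset.mul_sum, h1, h2]
  simp only [Finset.sum_const, Finset.card_univ, Fintype.card_fin, nsmul_eq_mul]
  unfold ovl; ring

/-- `E|z|` for a standard Gaussian. -/
noncomputable def kap : ℝ := ∫ x, |x| ∂(gaussianReal 0 1)

lemma kap_pos : 0 < kap := by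
  have hi : Integrable (fun x : ℝ => |x|) (gaussianReal 0 1) :=
    (memLp_one_iff_integrable.1 (memLp_id_gaussianReal' 1 (by simp))).abs
  unfold kap
  rw [integral_pos_iff_support_of_nonneg (fun x => abs_nonneg x) hi]
  have hs : Function.support (fun x : ℝ => |x|) = {0}ᶜ := by
    ext x; simp
  rw [hs]
  have h0 : gaussianReal 0 1 ({0} : Set ℝ) = 0 :=
    gaussianReal_absolutelyContinuous 0 one_ne_zero (by simp)
  rw [prob_compl_eq_one_iff (measurableSet_singleton 0) |>.2 h0]
  exact one_pos

lemma kap_coord {n : ℕ} (p : Fin n) :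
    Integrable (fun z : Fin n → ℝ => |z p|) (gpi fun _ => 1) ∧
    ∫ z, |z p| ∂(gpi (fun _ : Fin n => 1)) = kap := by
  refine ⟨(integrable_coord _ p).abs, ?_⟩
  have hp := measurePreserving_eval (fun _ : Fin n => gaussianReal 0 1) p
  unfold kap
  conv_rhs => rw [← hp.map_eq]
  rw [integral_map hp.measurable.aemeasurable (by fun_prop)]
  rfl

lemma kap_sum (n : ℕ) (c : ℝ) :
    Integrable (fun z : Fin n → ℝ => c * ∑ p, |z p|) (gpi fun _ => 1) ∧
    ∫ z, c * ∑ p, |z p| ∂(gpi (fun _ : Fin n => 1)) = c * (n * kap) := by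
  have hi := integrable_finsetSum (μ := gpi fun _ : Fin n => 1)
    (f := fun (p : Fin n) (z : Fin n → ℝ) => |z p|) Finset.univ fun p _ => (kap_coord p).1
  refine ⟨hi.const_mul c, ?_⟩
  rw [integral_const_mul, integral_finsetSum _ fun p _ => (kap_coord p).1]
  simp [(kap_coord _).2]

lemma Emax0_eq (N : ℕ) (α : ℚ) : Emax N α (fun ω σ => H0 ω σ)
    = ∫ ω, ⨆ a : SNset N α, lin (fun a : SNset N α => cq fun i => spin (a.1 i)) ω a
        ∂(gpi (vgoe N)) := by
  unfold Emax
  rw [goe_eq]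
  simp_rw [sSup_image', H0_lin]
  rfl

lemma Emax1_eq (N : ℕ) (α : ℚ) : Emax N α (fun ω σ => H1 α ω σ)
    = ∫ ω, ⨆ a : SNset N α,
        lin (fun a : SNset N α => cq fun i => spin (a.1 i) - (2 * (α : ℝ) - 1)) ω a
        ∂(gpi (vgoe N)) := by
  unfold Emax
  rw [goe_eq]
  simp_rw [sSup_image', H1_lin]
  rfl

/-- First comparison. -/
lemma cmp_one (N : ℕ) (hN : 0 < N) (α : ℚ) (hα0 : 0 < α) (hα : α < 1 / 2)
    (hne : (SNset N α).Nonempty) (l : ℝ) (hl : 0 ≤ l)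
    (hl2 : l ^ 2 * (1 - (2 * (α : ℝ) - 1) ^ 2) = 1) :
    l * Emax N α (fun ω σ => H1 α ω σ) ≤ Emax N α (fun ω σ => H0 ω σ) := by
  classical
  have : Nonempty (SNset N α) := hne.to_subtype
  have : Fintype (SNset N α) := Fintype.ofFinite _
  rw [Emax0_eq, Emax1_eq, ← integral_const_mul]
  simp_rw [Real.mul_iSup_of_nonneg hl]
  have l1 : ∀ ω (a : SNset N α),
      l * lin (fun a : SNset N α => cq fun i => spin (a.1 i) - (2 * (α : ℝ) - 1)) ω a
      = lin (fun (a : SNset N α) p => l * cq (fun i => spin (a.1 i) - (2 * (α : ℝ) - 1)) p) ω a := by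
    intro ω a
    unfold lin; rw [Finset.mul_sum]; exact Finset.sum_congr rfl fun k _ => by ring
  simp_rw [l1]
  refine sudakov_fernique _ (vgoe_ne N) _ (vgoe_ne N) _ _ fun a b => ?_
  have c1 : ∀ a b : SNset N α,
      lcov (vgoe N) (fun (a : SNset N α) p => l * cq (fun i => spin (a.1 i) - (2 * (α : ℝ) - 1)) p) a b
      = l ^ 2 * (2 * (N : ℝ)⁻¹ * (ovl a.1 b.1 - N * (2 * (α : ℝ) - 1) ^ 2) ^ 2) := by
    intro a b
    rw [← ovl_shift a.2 b.2, ← cq_cov]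
    unfold lcov; rw [Finset.mul_sum]; exact Finset.sum_congr rfl fun k _ => by ring
  have c2 : ∀ a b : SNset N α,
      lcov (vgoe N) (fun (a : SNset N α) => cq (fun i => spin (a.1 i))) a b
      = 2 * (N : ℝ)⁻¹ * (ovl a.1 b.1) ^ 2 := fun a b => cq_cov _ _
  simp only [c1, c2, ovl_self]
  have hNr : (0 : ℝ) < N := by exact_mod_cast hN
  set m := 2 * (α : ℝ) - 1
  set r := ovl a.1 b.1
  have key : l ^ 2 * ((N - N * m ^ 2) ^ 2 - (r - N * m ^ 2) ^ 2) ≤ (N : ℝ) ^ 2 - r ^ 2 := by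
    have e : (N : ℝ) ^ 2 - r ^ 2 = l ^ 2 * (1 - m ^ 2) * (N ^ 2 - r ^ 2) := by rw [hl2, one_mul]
    have e2 : (N : ℝ) ^ 2 - r ^ 2 - l ^ 2 * ((N - N * m ^ 2) ^ 2 - (r - N * m ^ 2) ^ 2)
        = l ^ 2 * (m ^ 2 * (N - r) ^ 2) := by
      rw [e]; ring
    have : 0 ≤ l ^ 2 * (m ^ 2 * (N - r) ^ 2) := by positivity
    linarith
  have hi : 0 ≤ 4 * (N : ℝ)⁻¹ := by positivity
  have := mul_le_mul_of_nonneg_left key hi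
  linarith

/-- Upper bound on the maximum of `H0`. -/
lemma upper_H0 (N : ℕ) (hN : 0 < N) (α : ℚ) (hne : (SNset N α).Nonempty) :
    Emax N α (fun ω σ => H0 ω σ) ≤ 2 * (N * kap) := by
  classical
  have : Nonempty (SNset N α) := hne.to_subtype
  have : Fintype (SNset N α) := Fintype.ofFinite _
  have hNr : (0 : ℝ) < N := by exact_mod_cast hN
  rw [Emax0_eq, ← (kap_sum N 2).2]
  have h1 := sudakov_fernique (vgoe N) (vgoe_ne N) (fun _ : Fin N => 1) (fun _ => one_ne_zero)
    (fun a : SNset N α => cq fun i => spin (a.1 i))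
    (fun (a : SNset N α) i => 2 * spin (a.1 i)) ?_
  · refine h1.trans (integral_mono (lin_iSup_integrable _ _) (kap_sum N 2).1 fun z => ?_)
    refine ciSup_le fun a => ?_
    unfold lin
    rw [Finset.mul_sum]
    refine Finset.sum_le_sum fun i _ => ?_
    unfold spin
    beta_reduce
    split_ifs
    · linarith [le_abs_self (z i)]
    · linarith [neg_le_abs (z i)]
  · intro a b
    have c1 : ∀ a b : SNset N α,
        lcov (fun _ : Fin N => 1) (fun (a : SNset N α) i => 2 * spin (a.1 i)) a b
        = 4 * ovl a.1 b.1 := by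
      intro a b
      unfold lcov ovl; rw [Finset.mul_sum]
      refine Finset.sum_congr rfl fun k _ => ?_
      push_cast; ring
    have c2 : ∀ a b : SNset N α,
        lcov (vgoe N) (fun (a : SNset N α) => cq (fun i => spin (a.1 i))) a b
        = 2 * (N : ℝ)⁻¹ * (ovl a.1 b.1) ^ 2 := fun a b => cq_cov _ _
    simp only [c1, c2, ovl_self]
    set r := ovl a.1 b.1
    have : 4 * (N : ℝ) + 4 * N - 2 * (4 * r) - (2 * (N : ℝ)⁻¹ * N ^ 2 + 2 * (N : ℝ)⁻¹ * N ^ 2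
        - 2 * (2 * (N : ℝ)⁻¹ * r ^ 2)) = 4 * (N : ℝ)⁻¹ * (N - r) ^ 2 := by
      field_simp; ring
    have h : 0 ≤ 4 * (N : ℝ)⁻¹ * (N - r) ^ 2 := by positivity
    linarith

/-- The paired configurations. -/
def pcfg {k l : ℕ} (s : Fin k → Bool) : Fin (k + (k + l)) → Bool :=
  Fin.append s (Fin.append (fun p => !(s p)) (fun _ => false))

lemma spin_not (b : Bool) : spin (!b) = - spin b := by cases b <;> simp [spin]

lemma pcfg_mem {k l : ℕ} {α : ℚ} (h : α * ((k + (k + l) : ℕ) : ℚ) = k) (s : Fin k → Bool) :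
    pcfg (l := l) s ∈ SNset (k + (k + l)) α := by
  have hr : (α : ℝ) * ((k + (k + l) : ℕ) : ℝ) = k := by exact_mod_cast h
  change ∑ i, spin (pcfg s i) = _
  rw [Fin.sum_univ_add, Fin.sum_univ_add]
  simp only [pcfg, Fin.append_left, Fin.append_right, spin_not, Finset.sum_neg_distrib]
  have : ((k + (k + l) : ℕ) : ℝ) * (2 * (α : ℝ) - 1) = - l := by
    have : ((k + (k + l) : ℕ) : ℝ) * (2 * (α : ℝ) - 1)
      = 2 * ((α : ℝ) * ((k + (k + l) : ℕ) : ℝ)) - ((k + (k + l) : ℕ) : ℝ) := by ring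
    rw [this, hr]; push_cast; ring
  rw [this]
  simp [spin]

lemma pcfg_ovl {k l : ℕ} (s t : Fin k → Bool) :
    ovl (pcfg (l := l) s) (pcfg (l := l) t) = 2 * ovl s t + l := by
  unfold ovl
  rw [Fin.sum_univ_add, Fin.sum_univ_add]
  simp only [pcfg, Fin.append_left, Fin.append_right, spin_not, neg_mul_neg]
  simp [spin]; ring

/-- Lower bound on the maximum of `H1`. -/
lemma lower_H1 (k l : ℕ) (α : ℚ) (hα0 : 0 < α) (hα : α < 1 / 2) (hN : 0 < k + (k + l))
    (h : α * ((k + (k + l) : ℕ) : ℚ) = k) (c : ℝ) (hc0 : 0 ≤ c)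
    (hc : c ^ 2 = 16 * (α : ℝ) * (1 - 2 * α)) :
    c * (k * kap) ≤ Emax (k + (k + l)) α (fun ω σ => H1 α ω σ) := by
  classical
  have hne : (SNset (k + (k + l)) α).Nonempty := ⟨_, pcfg_mem h fun _ => false⟩
  have : Nonempty (SNset (k + (k + l)) α) := hne.to_subtype
  have : Fintype (SNset (k + (k + l)) α) := Fintype.ofFinite _
  have hr : (α : ℝ) * ((k + (k + l) : ℕ) : ℝ) = k := by exact_mod_cast h
  rw [Emax1_eq, ← (kap_sum k c).2]
  set N := k + (k + l) with hNdef
  have hNr : (0 : ℝ) < N := by exact_mod_cast hN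
  have hα0r : (0 : ℝ) < α := by exact_mod_cast hα0
  have h1 := sudakov_fernique (fun _ : Fin k => 1) (fun _ => one_ne_zero) (vgoe N) (vgoe_ne N)
    (fun (s : Fin k → Bool) i => c * spin (s i))
    (fun s : Fin k → Bool => cq fun i => spin (pcfg (l := l) s i) - (2 * (α : ℝ) - 1)) ?_
  · refine (integral_mono (kap_sum k c).1 (lin_iSup_integrable (fun _ : Fin k => 1)
      (fun (s : Fin k → Bool) i => c * spin (s i))) fun z => ?_).trans (h1.trans
      (integral_mono (lin_iSup_integrable _ _) (lin_iSup_integrable _ _) fun ω => ?_))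
    · refine le_trans (le_of_eq ?_) (le_ciSup (Set.finite_range _).bddAbove
        (fun p => decide (0 ≤ z p)))
      unfold lin
      rw [Finset.mul_sum]
      refine Finset.sum_congr rfl fun p _ => ?_
      by_cases hz : 0 ≤ z p
      · simp [spin, hz, abs_of_nonneg hz]
      · simp [spin, hz, abs_of_neg (not_le.1 hz)]
    · refine ciSup_le fun s => ?_
      exact le_ciSup (f := fun a : SNset N α =>
        lin (fun a : SNset N α => cq fun i => spin (a.1 i) - (2 * (α : ℝ) - 1)) ω a)
        (Set.finite_range _).bddAbove ⟨pcfg s, pcfg_mem h s⟩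
  · intro s t
    have c1 : ∀ s t : Fin k → Bool,
        lcov (fun _ : Fin k => 1) (fun (s : Fin k → Bool) i => c * spin (s i)) s t
        = c ^ 2 * ovl s t := by
      intro s t
      unfold lcov ovl; rw [Finset.mul_sum]
      refine Finset.sum_congr rfl fun k _ => ?_
      push_cast; ring
    have c2 : ∀ s t : Fin k → Bool,
        lcov (vgoe N) (fun s : Fin k → Bool =>
          cq fun i => spin (pcfg (l := l) s i) - (2 * (α : ℝ) - 1)) s t
        = 2 * (N : ℝ)⁻¹ * (2 * ovl s t + l - N * (2 * (α : ℝ) - 1) ^ 2) ^ 2 := by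
      intro s t
      rw [← pcfg_ovl, ← ovl_shift (pcfg_mem h s) (pcfg_mem h t)]
      exact cq_cov _ _
    simp only [c1, c2, ovl_self]
    have hρ := abs_le.1 (ovl_abs s t)
    set ρ := ovl s t
    have hl : (l : ℝ) = N - 2 * k := by rw [hNdef]; push_cast; ring
    rw [hl, ← hr, hc]
    rw [← hr] at hρ
    set n : ℝ := (N : ℝ)
    set a : ℝ := (α : ℝ)
    have e : 2 * n⁻¹ * (2 * (a * n) + (n - 2 * (a * n)) - n * (2 * a - 1) ^ 2) ^ 2
        + 2 * n⁻¹ * (2 * (a * n) + (n - 2 * (a * n)) - n * (2 * a - 1) ^ 2) ^ 2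
        - 2 * (2 * n⁻¹ * (2 * ρ + (n - 2 * (a * n)) - n * (2 * a - 1) ^ 2) ^ 2)
        - (16 * a * (1 - 2 * a) * (a * n) + 16 * a * (1 - 2 * a) * (a * n)
          - 2 * (16 * a * (1 - 2 * a) * ρ))
        = 16 * n⁻¹ * ((a * n - ρ) * (a * n + ρ)) := by
      field_simp; ring
    have hp : 0 ≤ 16 * n⁻¹ * ((a * n - ρ) * (a * n + ρ)) :=
      mul_nonneg (by positivity) (mul_nonneg (by linarith) (by linarith))
    linarith

end model

/-- For every rational `α ∈ (0,1/2)` there is a constant `C₀(α) > 0` with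
`liminf_{N→∞} (1/N)(E[max_{σ∈S_N(α)} H_0(σ)] − E[max_{σ∈S_N(α)} H_1(σ)]) > C₀(α)`,
where the liminf is over integers `N` with `αN` an integer. -/
theorem statement7 (α : ℚ) (hα0 : 0 < α) (hα : α < 1 / 2) :
    ∃ C₀ : ℝ, 0 < C₀ ∧
      C₀ < Filter.liminf (fun N : ℕ =>
              ((N : ℝ))⁻¹ * (Emax N α (fun ω σ => H0 ω σ) - Emax N α (fun ω σ => H1 α ω σ)))
            (Filter.atTop ⊓ Filter.principal {N | alphaIntegral α N}) := by

  have hαr0 : (0 : ℝ) < α := by exact_mod_cast hα0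
  have hαr : (α : ℝ) < 1 / 2 := by
    have : ((α : ℚ) : ℝ) < ((1 / 2 : ℚ) : ℝ) := by exact_mod_cast hα
    simpa using this
  have hD : 0 < 1 - (2 * (α : ℝ) - 1) ^ 2 := by nlinarith
  have hD1 : 1 - (2 * (α : ℝ) - 1) ^ 2 < 1 := by nlinarith
  obtain ⟨l, hl1, hl2⟩ : ∃ l : ℝ, 1 < l ∧ l ^ 2 * (1 - (2 * (α : ℝ) - 1) ^ 2) = 1 := by
    refine ⟨√((1 - (2 * (α : ℝ) - 1) ^ 2)⁻¹), ?_, ?_⟩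
    · rw [Real.lt_sqrt zero_le_one, one_pow]
      exact (one_lt_inv₀ hD).2 hD1
    · rw [Real.sq_sqrt (by positivity), inv_mul_cancel₀ hD.ne']
  have hcp : 0 < 16 * (α : ℝ) * (1 - 2 * α) := mul_pos (by positivity) (by linarith)
  set c := √(16 * (α : ℝ) * (1 - 2 * α)) with hcdef
  have hc0 : 0 < c := Real.sqrt_pos.2 hcp
  have hc : c ^ 2 = 16 * (α : ℝ) * (1 - 2 * α) := Real.sq_sqrt hcp.le
  have hk := kap_pos
  have main : ∀ N : ℕ, 0 < N → alphaIntegral α N →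
      (l - 1) * (c * (α * kap)) ≤ ((N : ℝ))⁻¹ *
        (Emax N α (fun ω σ => H0 ω σ) - Emax N α (fun ω σ => H1 α ω σ)) ∧
      ((N : ℝ))⁻¹ * (Emax N α (fun ω σ => H0 ω σ) - Emax N α (fun ω σ => H1 α ω σ))
        ≤ 2 * kap := by
    intro N hN ⟨k, hkN⟩
    have hNq : (0 : ℚ) < N := by exact_mod_cast hN
    have h2k : 2 * k ≤ N := by
      have : (2 : ℚ) * k ≤ N := by rw [← hkN]; nlinarith
      exact_mod_cast this
    obtain ⟨j, rfl⟩ : ∃ j, N = k + (k + j) := ⟨N - 2 * k, by omega⟩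
    have hr : (α : ℝ) * ((k + (k + j) : ℕ) : ℝ) = k := by exact_mod_cast hkN
    have hne : (SNset (k + (k + j)) α).Nonempty := ⟨_, pcfg_mem hkN fun _ => false⟩
    have b1 := cmp_one _ hN α hα0 hα hne l (by linarith) hl2
    have b2 := lower_H1 k j α hα0 hα hN hkN c hc0.le hc
    have b3 := upper_H0 _ hN α hne
    rw [← hr] at b2
    set n : ℝ := ((k + (k + j) : ℕ) : ℝ)
    have hn : 0 < n := Nat.cast_pos.2 hN
    set E0 := Emax (k + (k + j)) α (fun ω σ => H0 ω σ)
    set E1 := Emax (k + (k + j)) α (fun ω σ => H1 α ω σ)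
    constructor
    · rw [inv_mul_eq_div, le_div_iff₀ hn]
      have := mul_le_mul_of_nonneg_left b2 (by linarith : 0 ≤ l - 1)
      nlinarith
    · rw [inv_mul_eq_div, div_le_iff₀ hn]
      have : 0 ≤ c * (α * n * kap) := by positivity
      linarith
  have hpos : 0 < (l - 1) * (c * (α * kap)) := mul_pos (by linarith) (by positivity)
  refine ⟨(l - 1) * (c * (α * kap)) / 2, by linarith, ?_⟩
  refine lt_of_lt_of_le (half_lt_self hpos) ?_
  have hev : ∀ᶠ N : ℕ in Filter.atTop ⊓ Filter.principal {N | alphaIntegral α N},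
      0 < N ∧ alphaIntegral α N := by
    rw [Filter.eventually_inf_principal]
    filter_upwards [Filter.eventually_gt_atTop 0] with N hN h
    exact ⟨hN, h⟩
  have hnb : (Filter.atTop ⊓ Filter.principal {N | alphaIntegral α N}).NeBot := by
    rw [← Filter.frequently_mem_iff_neBot, Filter.frequently_atTop]
    intro a
    refine ⟨α.den * a, Nat.le_mul_of_pos_left a α.den_pos, α.num.toNat * a, ?_⟩
    have h1 : α * α.den = α.num := Rat.mul_den_eq_num α
    have h2 : ((α.num.toNat : ℕ) : ℚ) = α.num := by
      have : ((α.num.toNat : ℕ) : ℤ) = α.num := Int.toNat_of_nonneg (Rat.num_pos.2 hα0).le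
      exact_mod_cast this
    push_cast
    rw [h2, ← mul_assoc, h1]
  refine Filter.le_liminf_of_le ?_ (hev.mono fun N h => (main N h.1 h.2).1)
  refine Filter.IsBoundedUnder.isCoboundedUnder_ge ?_
  exact ⟨2 * kap, Filter.eventually_map.2 (hev.mono fun N h => (main N h.1 h.2).2)⟩
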